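/- arXiv:2111.00927 — 4 statements merged into one kernel-verified Lean document; each statement's English description precedes it below -/
import Mathlib

section
/- Variance lower bound by the operator variance (Eq. (21) of the paper): Let ρ be a density matrix on ℂ^d, let (E_x)_{x∈X} be a POVM on a finite outcome set X, let θ̂ : X → ℝ be an estimator, and set X̄ := Σ_x θ̂(x) E_x and ΔX := X̄ − (Re tr(ρ X̄))·I. Then the variance satisfies V_ρ[θ̂] := Σ_x θ̂(x)² Re tr(ρ E_x) − (Σ_x θ̂(x) Re tr(ρ E_x))² ≥ Re tr(ρ (ΔX)²). -/
open Matrix BigOperators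
open scoped ComplexOrder

/-!
The inequality is the Kadison–Schwarz inequality for the unital positive map
`f ↦ ∑ x, f x • E x`, averaged over the state `ρ`. With `A x = θ̂ x • 1 - X̄` (Hermitian), each
`A x * E x * A x` is positive semidefinite, and because `∑ x, E x = 1` these matrices sum to
`∑ x, (θ̂ x)² • E x - X̄²`. Pairing with `ρ` gives `Re tr(ρ X̄²) ≤ ∑ x, (θ̂ x)² Re tr(ρ E x)`
(`re_trace_mul_nonneg`, `sum_sandwich`). Since `tr ρ = 1`, subtracting the squared mean from both
sides turns this into the comparison of the two variances.
-/

open scoped MatrixOrder in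
/-- Two positive semidefinite matrices have nonnegative trace pairing: for `P = Bᴴ B`, cyclicity
gives `tr(ρ P) = tr(B ρ Bᴴ)`. -/
lemma re_trace_mul_nonneg {d : ℕ} {ρ P : Matrix (Fin d) (Fin d) ℂ}
    (hρ : ρ.PosSemidef) (hP : P.PosSemidef) : 0 ≤ (Matrix.trace (ρ * P)).re := by
  obtain ⟨B, rfl⟩ : ∃ B : Matrix (Fin d) (Fin d) ℂ, P = Bᴴ * B :=
    CStarAlgebra.nonneg_iff_eq_star_mul_self.mp hP.nonneg
  have h := (hρ.mul_mul_conjTranspose_same B).trace_nonneg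
  rw [← Matrix.mul_assoc, Matrix.trace_mul_comm, ← Matrix.mul_assoc]
  exact (Complex.le_def.mp h).1

/-- The defect in the Kadison–Schwarz inequality, written as a sum of sandwiches of the `E x`. When
the `E x` are positive semidefinite, `M` is Hermitian and `t` is real, each summand is positive semidefinite. -/
lemma sum_sandwich {d : ℕ} {X : Type*} [Fintype X]
    (E : X → Matrix (Fin d) (Fin d) ℂ) (hEsum : ∑ x, E x = 1) (t : X → ℂ)
    (M : Matrix (Fin d) (Fin d) ℂ) (hM : M = ∑ x, t x • E x) :
    ∑ x, (t x • (1 : Matrix (Fin d) (Fin d) ℂ) - M) * E x * (t x • 1 - M)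
      = ∑ x, (t x) ^ 2 • E x - M * M := by
  have h : ∀ x, (t x • (1 : Matrix (Fin d) (Fin d) ℂ) - M) * E x * (t x • 1 - M)
      = (t x) ^ 2 • E x - (t x • E x) * M - M * (t x • E x) + M * E x * M := by
    intro x
    simp only [sub_mul, mul_sub, smul_mul_assoc, mul_smul_comm, one_mul, mul_one, smul_sub, smul_smul, sq]
    abel
  simp only [h, Finset.sum_add_distrib, Finset.sum_sub_distrib, ← Finset.sum_mul,
    ← Finset.mul_sum, ← hM, hEsum, mul_one]
  abel

/-- Variance lower bound by the operator variance (Eq. (21)):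
`V_ρ[θ̂] ≥ Re tr(ρ (ΔX)²)` where `X̄ = ∑ x, θ̂ x • E x` and
`ΔX = X̄ − (Re tr(ρ X̄)) • 1`. -/
theorem variance_ge_operator_variance {d : ℕ} {X : Type*} [Fintype X]
    (ρ : Matrix (Fin d) (Fin d) ℂ) (hρ : ρ.PosSemidef) (hρtr : ρ.trace = 1)
    (E : X → Matrix (Fin d) (Fin d) ℂ)
    (hE : ∀ x, (E x).PosSemidef) (hEsum : ∑ x, E x = 1)
    (est : X → ℝ)
    (Xbar : Matrix (Fin d) (Fin d) ℂ)
    (hXbar : Xbar = ∑ x, (est x : ℂ) • E x)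
    (ΔX : Matrix (Fin d) (Fin d) ℂ)
    (hΔX : ΔX = Xbar - (((Matrix.trace (ρ * Xbar)).re : ℂ)) • (1 : Matrix (Fin d) (Fin d) ℂ)) :
    ∑ x, (est x) ^ 2 * (Matrix.trace (ρ * E x)).re
        - (∑ x, est x * (Matrix.trace (ρ * E x)).re) ^ 2
      ≥ (Matrix.trace (ρ * (ΔX * ΔX))).re := by
  have hX : Xbar.IsHermitian := by
    rw [hXbar, Matrix.IsHermitian, Matrix.conjTranspose_sum]
    exact Finset.sum_congr rfl fun x _ => by
      rw [Matrix.conjTranspose_smul, (hE x).isHermitian.eq]; simp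
  have hpos : ∀ x, 0 ≤ (Matrix.trace (ρ * (((est x : ℂ) • (1 : Matrix (Fin d) (Fin d) ℂ) - Xbar)
      * E x * ((est x : ℂ) • 1 - Xbar)))).re := by
    intro x
    refine re_trace_mul_nonneg hρ ?_
    have h := (hE x).mul_mul_conjTranspose_same ((est x : ℂ) • 1 - Xbar)
    have hA : ((est x : ℂ) • (1 : Matrix (Fin d) (Fin d) ℂ) - Xbar)ᴴ = (est x : ℂ) • 1 - Xbar := by
      rw [Matrix.conjTranspose_sub, Matrix.conjTranspose_smul, hX.eq]; simp
    rwa [hA] at h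
  have hkadison : 0 ≤ ∑ x, (est x) ^ 2 * (Matrix.trace (ρ * E x)).re
      - (Matrix.trace (ρ * (Xbar * Xbar))).re := by
    have h := Finset.sum_nonneg fun x (_ : x ∈ Finset.univ) => hpos x
    rw [← Complex.re_sum, ← Matrix.trace_sum, ← Finset.mul_sum,
      sum_sandwich E hEsum (fun x => (est x : ℂ)) Xbar hXbar] at h
    simpa [mul_sub, Finset.mul_sum, Matrix.trace_sum, ← Complex.ofReal_pow] using h
  have hmean : (Matrix.trace (ρ * Xbar)).re = ∑ x, est x * (Matrix.trace (ρ * E x)).re := by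
    simp [hXbar, Finset.mul_sum, Matrix.trace_sum]
  have hvar : (Matrix.trace (ρ * (ΔX * ΔX))).re
      = (Matrix.trace (ρ * (Xbar * Xbar))).re - (Matrix.trace (ρ * Xbar)).re ^ 2 := by
    rw [hΔX]
    generalize hm : (Matrix.trace (ρ * Xbar)).re = m
    simp [sub_mul, mul_sub, Matrix.trace_sub, hρtr, hm]
    ring
  rw [hvar, ← hmean]
  linarith
end

section
/- L'Hôpital-type limit for vanishing eigenvalues (the last equality in Eq. (10) of the paper): Let f : ℝ → ℝ be twice continuously differentiable on a neighborhood of a point a, with f(θ) ≥ 0 for all θ in that neighborhood, f(a) = 0, and f''(a) > 0. Then f'(a) = 0, f(θ) > 0 for all θ ≠ a sufficiently close to a, and the limit of f'(θ)²/f(θ) as θ → a with θ ≠ a equals 2 f''(a). -/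
/-!
Since `f ≥ 0` near `a`, every zero of `f` near `a` is a local minimum, hence a critical point; in
particular `f' a = 0`. As `f'' a ≠ 0`, this zero of `f'` is isolated, so `f` has no zero near `a`
other than `a` and is positive there. Finally L'Hôpital's rule (`HasDerivAt.lhopital_zero_nhdsNE`)
applies to `f'² / f`: the quotient of the derivatives is `2 f' f'' / f' = 2 f''`, which tends to
`2 f'' a` by continuity of `f''`.
-/

open scoped Topology

/-- L'Hôpital-type limit for vanishing eigenvalues (last equality in Eq. (10)):
if `f` is C² and nonnegative on a neighborhood of `a`, `f a = 0`, and
`f'' a > 0`, then `f' a = 0`, `f > 0` near (but off) `a`, and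
`f'(θ)²/f(θ) → 2 f''(a)` as `θ → a`, `θ ≠ a`. -/
theorem lhopital_vanishing_eigenvalue
    (f : ℝ → ℝ) (a : ℝ) (s : Set ℝ) (hs : s ∈ 𝓝 a)
    (hf : ContDiffOn ℝ 2 f s)
    (hnn : ∀ θ ∈ s, 0 ≤ f θ)
    (hfa : f a = 0)
    (hf'' : 0 < deriv (deriv f) a) :
    deriv f a = 0 ∧
    (∀ᶠ θ in 𝓝[≠] a, 0 < f θ) ∧
    Filter.Tendsto (fun θ => (deriv f θ) ^ 2 / f θ) (𝓝[≠] a)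
      (𝓝 (2 * deriv (deriv f) a)) := by
  obtain ⟨u, hus, hu, hau⟩ := mem_nhds_iff.1 hs
  have hfu : ContDiffOn ℝ 2 f u := hf.mono hus
  have hdu : ContDiffOn ℝ 1 (deriv f) u := hfu.deriv_of_isOpen hu (by norm_num)
  have hddu : ContDiffOn ℝ 0 (deriv (deriv f)) u := hdu.deriv_of_isOpen hu (by norm_num)
  have h1 : ∀ x ∈ u, HasDerivAt f (deriv f x) x := fun x hx =>
    ((hfu.differentiableOn (by norm_num)).differentiableAt (hu.mem_nhds hx)).hasDerivAt
  have h2 : ∀ x ∈ u, HasDerivAt (deriv f) (deriv (deriv f) x) x := fun x hx =>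
    ((hdu.differentiableOn (by norm_num)).differentiableAt (hu.mem_nhds hx)).hasDerivAt
  -- A zero of the nonnegative function `f` in `u` is a local minimum.
  have hcrit : ∀ x ∈ u, f x = 0 → deriv f x = 0 := fun x hx h0 => by
    have hmin : IsLocalMin f x := by
      filter_upwards [hu.mem_nhds hx] with y hy
      rw [h0]
      exact hnn y (hus hy)
    exact hmin.deriv_eq_zero
  have hda : deriv f a = 0 := hcrit a hau hfa
  have hev : ∀ᶠ x in 𝓝[≠] a, x ∈ u := eventually_nhdsWithin_of_eventually_nhds (hu.mem_nhds hau)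
  have hne : ∀ᶠ x in 𝓝[≠] a, deriv f x ≠ 0 := (h2 a hau).eventually_ne hf''.ne'
  refine ⟨hda, ?_, ?_⟩
  · filter_upwards [hev, hne] with x hx hx'
    exact lt_of_le_of_ne (hnn x (hus hx)) fun h => hx' (hcrit x hx h.symm)
  · refine HasDerivAt.lhopital_zero_nhdsNE
      (f' := fun x => 2 * deriv f x * deriv (deriv f) x) (g' := deriv f) ?_ ?_ hne ?_ ?_ ?_
    · filter_upwards [hev] with x hx
      simpa using (h2 x hx).fun_pow 2
    · filter_upwards [hev] with x hx using h1 x hx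
    · have h := (h2 a hau).continuousAt.tendsto.pow 2
      rw [hda, zero_pow two_ne_zero] at h
      exact tendsto_nhdsWithin_of_tendsto_nhds h
    · have h := (h1 a hau).continuousAt.tendsto
      rw [hfa] at h
      exact tendsto_nhdsWithin_of_tendsto_nhds h
    · have h := (hddu.continuousOn.continuousAt (hu.mem_nhds hau)).tendsto.const_mul 2
      refine (tendsto_nhdsWithin_of_tendsto_nhds h).congr' ?_
      filter_upwards [hne] with x hx
      field_simp
end

section
/- Limiting purification form of the quantum Cramér–Rao bound (Eq. (A13) of the paper): Let d ≥ 1 and let A : ℝ → M_d(ℂ) be a matrix-valued function that is differentiable at θ with derivative A'(θ) ≠ 0 (entrywise differentiability), such that ρ(s) := A(s) A(s)ᴴ is a density matrix for every s in a neighborhood of θ. Let (E_x)_{x∈X} be a POVM on a finite outcome set X and let θ̂ : X → ℝ be an estimator unbiased on a neighborhood of θ, i.e. Σ_x θ̂(x) Re tr(ρ(s) E_x) = s for all s in that neighborhood. Then the mean square error at θ satisfies Σ_x (θ̂(x) − θ)² Re tr(ρ(θ) E_x) ≥ 1/(4 ‖A'(θ)‖₂²). -/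
/-!
For each effect `E x`, the pairing `(M, N) ↦ Re tr(M Nᴴ E x)` is a symmetric, positive semidefinite
real bilinear form on matrices (`pairing_symm`, `pairing_nonneg`). Write `c x = est x - θ`.
Unbiasedness and `tr ρ = 1` say that `∑ x, c x * Re tr(ρ(s) E x) = s - θ` near `θ`; differentiating at
`θ` (`hasDerivAt_trace`) gives `2 ∑ x, c x * Re tr(A' Aᴴ E x) = 1`. Positivity of each form at
`t A' - c x A`, summed over `x`, then reads `0 ≤ t² F - t + V`, where `F = ‖A'‖₂²` and `V` is the mean
square error. The choice `t = 1 / (2 F)` yields `V ≥ 1 / (4 F)`; this is Cauchy–Schwarz for the sum of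
the forms.
-/

open Matrix BigOperators
open scoped ComplexOrder Topology

lemma pairing_nonneg {d : ℕ} {E : Matrix (Fin d) (Fin d) ℂ} (hE : E.PosSemidef)
    (M : Matrix (Fin d) (Fin d) ℂ) : 0 ≤ (trace (M * Mᴴ * E)).re := by
  have h := (hE.conjTranspose_mul_mul_same M).trace_nonneg
  rw [trace_mul_cycle] at h
  exact (Complex.le_def.1 h).1

lemma pairing_symm {d : ℕ} {E : Matrix (Fin d) (Fin d) ℂ} (hE : E.IsHermitian)
    (M N : Matrix (Fin d) (Fin d) ℂ) :
    (trace (M * Nᴴ * E)).re = (trace (N * Mᴴ * E)).re := by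
  have h : trace (M * Nᴴ * E) = star (trace (N * Mᴴ * E)) := by
    rw [← trace_conjTranspose, conjTranspose_mul, conjTranspose_mul, conjTranspose_conjTranspose,
      hE.eq, trace_mul_comm]
  rw [h]
  simp

/-- Positivity of the pairing at `t • M - c • N`, expanded. -/
lemma pairing_quadratic {d : ℕ} {E : Matrix (Fin d) (Fin d) ℂ} (hE : E.PosSemidef)
    (M N : Matrix (Fin d) (Fin d) ℂ) (t c : ℝ) :
    0 ≤ t ^ 2 * (trace (M * Mᴴ * E)).re - 2 * t * (c * (trace (M * Nᴴ * E)).re)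
      + c ^ 2 * (trace (N * Nᴴ * E)).re := by
  have h := pairing_nonneg hE ((t : ℂ) • M - (c : ℂ) • N)
  have hs := pairing_symm hE.isHermitian M N
  simp only [conjTranspose_sub, conjTranspose_smul, Matrix.sub_mul, Matrix.mul_sub,
    Matrix.smul_mul, Matrix.mul_smul, trace_sub, trace_smul, smul_eq_mul, Complex.star_def,
    Complex.conj_ofReal, Complex.sub_re, Complex.re_ofReal_mul] at h
  rw [← hs] at h
  linarith

/-- The product rule for `s ↦ Re tr(A(s) A(s)ᴴ E)`; its two terms agree by `pairing_symm`. -/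
lemma hasDerivAt_trace {d : ℕ} {E : Matrix (Fin d) (Fin d) ℂ} (hE : E.IsHermitian)
    {A : ℝ → Matrix (Fin d) (Fin d) ℂ} {θ : ℝ} {A' : Matrix (Fin d) (Fin d) ℂ}
    (hderiv : ∀ i j, HasDerivAt (fun s => A s i j) (A' i j) θ) :
    HasDerivAt (fun s => (trace (A s * (A s)ᴴ * E)).re)
      (2 * (trace (A' * (A θ)ᴴ * E)).re) θ := by
  have h : HasDerivAt (fun s => trace (A s * (A s)ᴴ * E))
      (trace ((A' * (A θ)ᴴ + A θ * A'ᴴ) * E)) θ := by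
    simp only [trace, diag_apply, mul_apply, Matrix.add_apply, conjTranspose_apply,
      ← Finset.sum_add_distrib]
    exact HasDerivAt.fun_sum fun i _ => HasDerivAt.fun_sum fun j _ =>
      (HasDerivAt.fun_sum fun k _ => (hderiv i k).mul (hderiv j k).star).mul_const _
  have h2 := Complex.reCLM.hasFDerivAt.comp_hasDerivAt θ h
  rw [Matrix.add_mul, trace_add] at h2
  have hs := pairing_symm hE A' (A θ)
  rw [Complex.reCLM_apply, Complex.add_re, ← hs, ← two_mul] at h2
  exact h2

/-- Limiting purification form of the quantum Cramér–Rao bound (Eq. (A13)):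
for a differentiable family of amplitudes `A s` with `ρ s = A s (A s)ᴴ` a
density matrix near `θ`, and an estimator unbiased on a neighborhood of `θ`,
the mean square error at `θ` is at least `1/(4 ‖A'(θ)‖₂²)`. -/
theorem limiting_purification_qcrb {d : ℕ} (hd : 1 ≤ d) {X : Type*} [Fintype X]
    (A : ℝ → Matrix (Fin d) (Fin d) ℂ) (θ : ℝ)
    (A' : Matrix (Fin d) (Fin d) ℂ) (hA'ne : A' ≠ 0)
    (hderiv : ∀ i j, HasDerivAt (fun s => A s i j) (A' i j) θ)
    (U : Set ℝ) (hU : U ∈ 𝓝 θ)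
    (hdm : ∀ s ∈ U, (A s * (A s)ᴴ).PosSemidef ∧ (A s * (A s)ᴴ).trace = 1)
    (E : X → Matrix (Fin d) (Fin d) ℂ)
    (hE : ∀ x, (E x).PosSemidef) (hEsum : ∑ x, E x = 1)
    (est : X → ℝ)
    (hub : ∀ s ∈ U, ∑ x, est x * (Matrix.trace (A s * (A s)ᴴ * E x)).re = s) :
    ∑ x, (est x - θ) ^ 2 * (Matrix.trace (A θ * (A θ)ᴴ * E x)).re
      ≥ 1 / (4 * (Matrix.trace (A'ᴴ * A')).re) := by
  have htr : ∀ M : Matrix (Fin d) (Fin d) ℂ,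
      ∑ x, (trace (M * E x)).re = (trace M).re := fun M => by
    rw [← Complex.re_sum, ← trace_sum, ← Matrix.mul_sum, hEsum, Matrix.mul_one]
  have hcross : ∑ x, (est x - θ) * (2 * (trace (A' * (A θ)ᴴ * E x)).re) = 1 := by
    have h1 : HasDerivAt (fun s => ∑ x, (est x - θ) * (trace (A s * (A s)ᴴ * E x)).re)
        (∑ x, (est x - θ) * (2 * (trace (A' * (A θ)ᴴ * E x)).re)) θ :=
      HasDerivAt.fun_sum fun x _ => (hasDerivAt_trace (hE x).isHermitian hderiv).const_mul _
    have h2 : HasDerivAt (fun s : ℝ => s - θ) 1 θ := (hasDerivAt_id θ).sub_const θ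
    refine h1.unique (h2.congr_of_eventuallyEq ?_)
    filter_upwards [hU] with s hs
    simp only [sub_mul, Finset.sum_sub_distrib, ← Finset.mul_sum, htr, hub s hs, (hdm s hs).2]
    simp
  have hFpos : 0 < (trace (A'ᴴ * A')).re := by
    have h0 := (posSemidef_conjTranspose_mul_self A').trace_nonneg
    have hne : trace (A'ᴴ * A') ≠ 0 := fun h =>
      hA'ne (trace_conjTranspose_mul_self_eq_zero_iff.1 h)
    exact (Complex.lt_def.1 (lt_of_le_of_ne h0 hne.symm)).1
  have hF : ∑ x, (trace (A' * A'ᴴ * E x)).re = (trace (A'ᴴ * A')).re := by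
    rw [htr, trace_mul_comm]
  set F : ℝ := trace (A'ᴴ * A') |>.re with hF_def
  -- `t = 1 / (2 F)` minimizes the quadratic `t² F - t + V`.
  have key := Finset.sum_nonneg fun x (_ : x ∈ Finset.univ) =>
    pairing_quadratic (hE x) A' (A θ) (1 / (2 * F)) (est x - θ)
  rw [Finset.sum_add_distrib, Finset.sum_sub_distrib, ← Finset.mul_sum, ← Finset.mul_sum, hF] at key
  have hcross' : ∑ x, (est x - θ) * (trace (A' * (A θ)ᴴ * E x)).re = 1 / 2 := by
    rw [← hcross, Finset.sum_div]
    exact Finset.sum_congr rfl fun x _ => by ring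
  rw [hcross'] at key
  have e : (1 / (2 * F)) ^ 2 * F - 2 * (1 / (2 * F)) * (1 / 2) = -(1 / (4 * F)) := by
    field_simp
    norm_num
  linarith
end

section
/- Generalized Yang–Chiribella–Hayashi inequality for (possibly biased) estimators in terms of the Bhattacharyya coefficient (Appendix B of the paper): Let X be a finite set, let p, q : X → ℝ be nonnegative with Σ_x p(x) = Σ_x q(x) = 1, and let θ̂ : X → ℝ. Write E_p = Σ_x θ̂(x) p(x), E_q = Σ_x θ̂(x) q(x), V_p = Σ_x θ̂(x)² p(x) − E_p², V_q = Σ_x θ̂(x)² q(x) − E_q², and let B(p,q) := Σ_x √(p(x) q(x)) be the Bhattacharyya coefficient. Then 4 (1 − B(p,q)) · (V_p + V_q + (E_q − E_p)²) ≥ (E_q − E_p)². -/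
/-!
Since `∑ x, (q x - p x) = 0`, the estimator may be centred at any constant `c`, and factoring
`q - p = (√q - √p) (√q + √p)` gives
`E_q - E_p = ∑ x, (√q - √p) * ((est x - c) (√q + √p))`. By Cauchy–Schwarz the square is at most
`∑ (√q - √p)² = 2 (1 - B)` times `∑ (est - c)² (√q + √p)² ≤ 2 ∑ (est - c)² (p + q)`.
For `c = E_p` the last sum is exactly `V_p + V_q + (E_q - E_p)²`.
-/

open BigOperators

/-- Generalized Yang–Chiribella–Hayashi inequality for (possibly biased)
estimators in terms of the Bhattacharyya coefficient (Appendix B):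
`4 (1 − B(p,q)) (V_p + V_q + (E_q − E_p)²) ≥ (E_q − E_p)²`. -/
theorem generalized_YCH_inequality {X : Type*} [Fintype X]
    (p q : X → ℝ) (hp : ∀ x, 0 ≤ p x) (hq : ∀ x, 0 ≤ q x)
    (hpsum : ∑ x, p x = 1) (hqsum : ∑ x, q x = 1)
    (est : X → ℝ) :
    4 * (1 - ∑ x, Real.sqrt (p x * q x))
        * (((∑ x, (est x) ^ 2 * p x) - (∑ x, est x * p x) ^ 2)
            + ((∑ x, (est x) ^ 2 * q x) - (∑ x, est x * q x) ^ 2)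
            + ((∑ x, est x * q x) - (∑ x, est x * p x)) ^ 2)
      ≥ ((∑ x, est x * q x) - (∑ x, est x * p x)) ^ 2 := by
  set μp := ∑ x, est x * p x with hμp
  set μq := ∑ x, est x * q x with hμq
  have hsp : ∀ x, √(p x) ^ 2 = p x := fun x => Real.sq_sqrt (hp x)
  have hsq : ∀ x, √(q x) ^ 2 = q x := fun x => Real.sq_sqrt (hq x)
  have hA : ∑ x, (√(q x) - √(p x)) ^ 2 = 2 * (1 - ∑ x, √(p x * q x)) := by
    have h : ∀ x, (√(q x) - √(p x)) ^ 2 = q x + p x - 2 * √(p x * q x) := fun x => by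
      rw [Real.sqrt_mul (hp x)]
      linear_combination hsp x + hsq x
    simp only [h, Finset.sum_sub_distrib, Finset.sum_add_distrib, ← Finset.mul_sum, hpsum, hqsum]
    ring
  have hΔ : ∑ x, (√(q x) - √(p x)) * ((est x - μp) * (√(q x) + √(p x))) = μq - μp := by
    have h : ∀ x, (√(q x) - √(p x)) * ((est x - μp) * (√(q x) + √(p x)))
        = est x * q x - est x * p x - μp * q x + μp * p x := fun x => by
      linear_combination (est x - μp) * (hsq x - hsp x)
    simp only [h, Finset.sum_sub_distrib, Finset.sum_add_distrib, ← Finset.mul_sum, hpsum, hqsum,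
      ← hμp, ← hμq]
    ring
  have hM : ∑ x, (est x - μp) ^ 2 * (p x + q x)
      = ((∑ x, est x ^ 2 * p x) - μp ^ 2) + ((∑ x, est x ^ 2 * q x) - μq ^ 2)
        + (μq - μp) ^ 2 := by
    have h : ∀ x, (est x - μp) ^ 2 * (p x + q x)
        = est x ^ 2 * p x + est x ^ 2 * q x - 2 * μp * (est x * p x) - 2 * μp * (est x * q x)
          + μp ^ 2 * p x + μp ^ 2 * q x := fun x => by ring
    simp only [h, Finset.sum_sub_distrib, Finset.sum_add_distrib, ← Finset.mul_sum, hpsum, hqsum,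
      ← hμp, ← hμq]
    ring
  have hC : ∑ x, ((est x - μp) * (√(q x) + √(p x))) ^ 2
      ≤ 2 * ∑ x, (est x - μp) ^ 2 * (p x + q x) := by
    rw [Finset.mul_sum]
    refine Finset.sum_le_sum fun x _ => ?_
    -- `(√q + √p)² ≤ 2 (p + q)`, the difference being `(√q - √p)²`
    rw [← hsp x, ← hsq x, Real.sqrt_sq (Real.sqrt_nonneg _), Real.sqrt_sq (Real.sqrt_nonneg _)]
    linarith [sq_nonneg ((est x - μp) * (√(q x) - √(p x)))]
  have hA0 : 0 ≤ ∑ x, (√(q x) - √(p x)) ^ 2 := Finset.sum_nonneg fun x _ => sq_nonneg _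
  rw [ge_iff_le, ← hM]
  calc (μq - μp) ^ 2
      ≤ (∑ x, (√(q x) - √(p x)) ^ 2) * ∑ x, ((est x - μp) * (√(q x) + √(p x))) ^ 2 := by
        rw [← hΔ]
        exact Finset.sum_mul_sq_le_sq_mul_sq _ _ _
    _ ≤ (∑ x, (√(q x) - √(p x)) ^ 2) * (2 * ∑ x, (est x - μp) ^ 2 * (p x + q x)) :=
        mul_le_mul_of_nonneg_left hC hA0
    _ = 4 * (1 - ∑ x, √(p x * q x)) * ∑ x, (est x - μp) ^ 2 * (p x + q x) := by
        rw [hA]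
        ring
end
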